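/- For every n ≥ 2, det(A_n) = (n+1) · ∏_{k=1}^{n} k^{2^{n−1−k}(n+4−k)}; moreover det(A_0) = 1 and det(A_1) = −2. In particular, A_n is invertible for every n ≥ 0. -/

import Mathlib

/-!
Consider the pencil `d_n(y) = det (A_n + y B_n)`. In block form,
`A_{n+1} + y B_{n+1} = [[(1+y) A_n, (1+y) A_n], [A_n, -(1+y) B_n]]`, and subtracting the first
block column from the second makes this block lower triangular, with diagonal blocks `(1+y) A_n`
and `-(A_n + (1+y) B_n)`. Hence, up to the sign `(-1)^(2^n)`,
`d_{n+1}(y) = (1+y)^(2^n) * det A_n * d_n(1+y)` (`det_pencil_succ`). Iterating down to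
`d_0(y) = 1 + y` gives a closed form for `d_{n+1}(y)` in terms of `det A_0, …, det A_n`
(`det_pencil`). At `y = 0`, comparing consecutive values of `n`, this becomes
`det A_{n+2} = (n+3) * ∏_{j=1}^{n+1} j^(2^(n+1-j)) * (det A_{n+1})^2` (`det_Amat_succ`),
a recursion which the claimed product satisfies because its exponents `e(n,k)` obey
`e(n+1,k) = 2 e(n,k) + 2^(n-k)` for `k ≤ n` and `e(n+1,n+1) = 2`.
-/

open Finset

/-- Restriction of a subset of `Fin (n+1)` to `Fin n` (forgetting the top element). -/
def resSet {n : ℕ} (I : Finset (Fin (n + 1))) : Finset (Fin n) :=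
  Finset.univ.filter (fun j : Fin n => Fin.castSucc j ∈ I)

mutual
  /-- The matrix `A_n`, rows/columns indexed by subsets of `{1,…,n}` (element `j`
  of `[n]` corresponds to `j-1 : Fin n`, i.e. anti-lexicographic/binary order). -/
  def Amat : (n : ℕ) → Matrix (Finset (Fin n)) (Finset (Fin n)) ℤ
    | 0 => Matrix.of fun _ _ => 1
    | n + 1 => Matrix.of fun I J =>
        if Fin.last n ∈ I then
          if Fin.last n ∈ J then - Bmat n (resSet I) (resSet J)
          else Amat n (resSet I) (resSet J)
        else Amat n (resSet I) (resSet J)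
  /-- The matrix `B_n`. -/
  def Bmat : (n : ℕ) → Matrix (Finset (Fin n)) (Finset (Fin n)) ℤ
    | 0 => Matrix.of fun _ _ => 1
    | n + 1 => Matrix.of fun I J =>
        if Fin.last n ∈ I then
          if Fin.last n ∈ J then - Bmat n (resSet I) (resSet J)
          else 0
        else Amat n (resSet I) (resSet J)
end

/-- The Walsh-Hadamard matrix `H_n`. -/
def Hmat : (n : ℕ) → Matrix (Finset (Fin n)) (Finset (Fin n)) ℤ
  | 0 => Matrix.of fun _ _ => 1
  | n + 1 => Matrix.of fun I J =>
      if Fin.last n ∈ I ∧ Fin.last n ∈ J then - Hmat n (resSet I) (resSet J)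
      else Hmat n (resSet I) (resSet J)

/-- The Möbius matrix `M_n` of the boolean lattice. -/
def Mobmat (n : ℕ) : Matrix (Finset (Fin n)) (Finset (Fin n)) ℤ :=
  Matrix.of fun I J => if I ⊆ J then (-1) ^ (J \ I).card else 0

/-- The zeta matrix `Z_n` of the boolean lattice. -/
def Zetamat (n : ℕ) : Matrix (Finset (Fin n)) (Finset (Fin n)) ℤ :=
  Matrix.of fun I J => if I ⊆ J then 1 else 0

/-- The subset of `[n] = {1,…,n}` corresponding to a subset of `Fin n`. -/
def natSet {n : ℕ} (I : Finset (Fin n)) : Finset ℕ := Finset.image (fun j : Fin n => (j : ℕ) + 1) I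

/-- The ordinal number of a subset in the anti-lexicographic order. -/
def ordFin {n : ℕ} (I : Finset (Fin n)) : ℕ := ∑ j ∈ I, 2 ^ (j : ℕ)

/-- The run (maximal interval of consecutive integers) of `I` containing `j`
(empty if `j ∉ I`). -/
def runOf (I : Finset ℕ) (j : ℕ) : Finset ℕ :=
  I.filter (fun i => ∀ k ∈ Finset.Icc (min i j) (max i j), k ∈ I)

/-- The set of runs (maximal intervals of consecutive integers) of `I`. -/
def runsOf (I : Finset ℕ) : Finset (Finset ℕ) := I.image (runOf I)

/-- `P` is a prefix of the interval `R`: it consists of an initial segment of `R`. -/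
def IsPrefixOf (P R : Finset ℕ) : Prop :=
  P ⊆ R ∧ ∀ i ∈ R, ∀ j ∈ P, i ≤ j → i ∈ P

lemma resSet_map {n : ℕ} (I : Finset (Fin n)) : resSet (I.map Fin.castSuccEmb) = I := by
  ext j; simp [resSet]

lemma resSet_insert {n : ℕ} (I : Finset (Fin n)) :
    resSet (insert (Fin.last n) (I.map Fin.castSuccEmb)) = I := by
  ext j; simp [resSet, Fin.castSucc_ne_last]

lemma last_notMem_map {n : ℕ} (I : Finset (Fin n)) :
    Fin.last n ∉ I.map Fin.castSuccEmb := by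
  simp [Fin.castSucc_ne_last]

/-- Splitting the subsets of `Fin (n+1)` into those without (`inl`) and with (`inr`) the top
element; this is the index splitting behind the 2×2 block form. -/
def subsetEquiv (n : ℕ) : Finset (Fin n) ⊕ Finset (Fin n) ≃ Finset (Fin (n + 1)) where
  toFun := Sum.elim (fun I => I.map Fin.castSuccEmb)
    (fun I => insert (Fin.last n) (I.map Fin.castSuccEmb))
  invFun I := if Fin.last n ∈ I then Sum.inr (resSet I) else Sum.inl (resSet I)
  left_inv := by
    rintro (I | I)
    · simp only [Sum.elim_inl, if_neg (last_notMem_map I), resSet_map]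
    · simp only [Sum.elim_inr, if_pos (mem_insert_self _ _), resSet_insert]
  right_inv := by
    intro I
    by_cases h : Fin.last n ∈ I
    · simp only [if_pos h, Sum.elim_inr]
      ext j
      refine Fin.lastCases ?_ (fun j => ?_) j
      · simp [h]
      · simp [resSet, Fin.castSucc_ne_last]
    · simp only [if_neg h, Sum.elim_inl]
      ext j
      refine Fin.lastCases ?_ (fun j => ?_) j
      · simp [h, Fin.castSucc_ne_last]
      · simp [resSet]

lemma pencil_blocks (n : ℕ) (y : ℤ) :
    (Amat (n + 1) + y • Bmat (n + 1)).submatrix (subsetEquiv n) (subsetEquiv n) =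
      Matrix.fromBlocks ((1 + y) • Amat n) ((1 + y) • Amat n) (Amat n) (-((1 + y) • Bmat n)) := by
  ext (I | I) (J | J) <;>
    simp only [subsetEquiv, Equiv.coe_fn_mk, Matrix.submatrix_apply, Matrix.add_apply,
      Matrix.smul_apply, Matrix.neg_apply, Amat, Bmat, Matrix.of_apply, Sum.elim_inl, Sum.elim_inr,
      if_neg (last_notMem_map _), if_pos (mem_insert_self _ _), resSet_map, resSet_insert,
      Matrix.fromBlocks_apply₁₁, Matrix.fromBlocks_apply₁₂, Matrix.fromBlocks_apply₂₁,
      Matrix.fromBlocks_apply₂₂, smul_eq_mul] <;> ring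

lemma det_pencil_succ (n : ℕ) (y : ℤ) :
    (Amat (n + 1) + y • Bmat (n + 1)).det =
      (-1) ^ 2 ^ n * ((1 + y) ^ 2 ^ n * (Amat n).det * (Amat n + (1 + y) • Bmat n).det) := by
  have hfac : Matrix.fromBlocks ((1 + y) • Amat n) ((1 + y) • Amat n) (Amat n)
        (-((1 + y) • Bmat n)) =
      Matrix.fromBlocks ((1 + y) • Amat n) 0 (Amat n) (-(Amat n + (1 + y) • Bmat n)) *
        Matrix.fromBlocks 1 1 0 1 := by
    rw [Matrix.fromBlocks_multiply]
    simp
  rw [← Matrix.det_submatrix_equiv_self (subsetEquiv n), pencil_blocks, hfac, Matrix.det_mul,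
    Matrix.det_fromBlocks_zero₁₂, Matrix.det_fromBlocks_zero₂₁, Matrix.det_neg, Matrix.det_smul]
  simp only [Fintype.card_finset, Fintype.card_fin, Matrix.det_one]
  ring

lemma det_pencil_zero (y : ℤ) : (Amat 0 + y • Bmat 0).det = 1 + y := by
  simp [Matrix.det_unique, Amat, Bmat]

lemma det_Amat_zero : (Amat 0).det = 1 := by
  simpa using det_pencil_zero 0

/-- The overall sign comes from the last unfolding step, the only one with `2 ^ n` odd. -/
lemma det_pencil (n : ℕ) (y : ℤ) :
    (Amat (n + 1) + y • Bmat (n + 1)).det =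
      -(n + 2 + y) * (∏ j ∈ range (n + 1), (j + 1 + y) ^ 2 ^ (n - j)) *
        ∏ i ∈ range (n + 1), (Amat i).det := by
  induction n generalizing y with
  | zero =>
    rw [det_pencil_succ, det_pencil_zero, zero_add, prod_range_one, prod_range_one, det_Amat_zero]
    simp
    ring
  | succ n ih =>
    rw [det_pencil_succ, ih, prod_range_succ (fun i => (Amat i).det) (n + 1),
      prod_range_succ' _ (n + 1)]
    have hs : (-1 : ℤ) ^ 2 ^ (n + 1) = 1 := by
      rw [pow_succ, mul_comm, pow_mul]; simp
    have hp : ∏ j ∈ range (n + 1), (((j + 1 : ℕ) : ℤ) + 1 + y) ^ 2 ^ (n + 1 - (j + 1)) =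
        ∏ j ∈ range (n + 1), ((j : ℤ) + 1 + (1 + y)) ^ 2 ^ (n - j) := by
      refine prod_congr rfl fun j _ => ?_
      rw [Nat.add_sub_add_right]
      push_cast
      ring
    rw [hs, hp]
    push_cast
    ring

/-- The product `∏_{j=1}^{n} j^(2^(n-j))`. -/
def hprod (n : ℕ) : ℤ := ∏ k ∈ Icc 1 n, (k : ℤ) ^ 2 ^ (n - k)

lemma hprod_succ (n : ℕ) : hprod (n + 1) = hprod n ^ 2 * (n + 1) := by
  rw [hprod, prod_Icc_succ_top (by omega), hprod, ← prod_pow]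
  congr 1
  · refine prod_congr rfl fun k hk => ?_
    rw [mem_Icc] at hk
    rw [← pow_mul, Nat.succ_sub hk.2, pow_succ]
  · simp

lemma det_Amat_eq (n : ℕ) :
    (Amat (n + 1)).det = -(n + 2) * hprod (n + 1) * ∏ i ∈ range (n + 1), (Amat i).det := by
  have h := det_pencil n 0
  simp only [zero_smul, add_zero] at h
  rw [h, hprod, ← Finset.Ico_add_one_right_eq_Icc, prod_Ico_eq_prod_range]
  congr 2
  refine prod_congr rfl fun j _ => ?_
  rw [add_comm 1 j, Nat.add_sub_add_right]
  push_cast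
  rfl

lemma det_Amat_one : (Amat 1).det = -2 := by
  rw [det_Amat_eq, zero_add, prod_range_one, det_Amat_zero]
  simp [hprod]

lemma det_Amat_succ (n : ℕ) :
    (Amat (n + 2)).det = (n + 3) * hprod (n + 1) * (Amat (n + 1)).det ^ 2 := by
  rw [det_Amat_eq (n + 1), hprod_succ (n + 1), prod_range_succ _ (n + 1), pow_two (Amat _).det]
  -- Only one factor `det A_{n+1}` is expanded; the other one already occurs on the left.
  conv_rhs => rw [← mul_assoc]; enter [1]; rw [det_Amat_eq n]
  push_cast
  ring

/-- The product in the claimed formula for `det A_n`. -/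
def eprod (n : ℕ) : ℤ := ∏ k ∈ Icc 1 n, (k : ℤ) ^ ((2 ^ (n - k) * (n + 4 - k)) / 2)

lemma eprod_succ (n : ℕ) : eprod (n + 1) = hprod n * eprod n ^ 2 * (n + 1) ^ 2 := by
  rw [eprod, prod_Icc_succ_top (by omega), hprod, eprod, ← prod_pow, ← prod_mul_distrib]
  congr 1
  · refine prod_congr rfl fun k hk => ?_
    rw [mem_Icc] at hk
    obtain ⟨m, rfl⟩ := Nat.exists_eq_add_of_le hk.2
    rw [← pow_mul, ← pow_add]
    congr 1
    have h1 : k + m + 1 - k = m + 1 := by omega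
    have h2 : k + m + 1 + 4 - k = m + 5 := by omega
    have h3 : k + m - k = m := by omega
    have h4 : k + m + 4 - k = m + 4 := by omega
    rw [h1, h2, h3, h4]
    -- For `m = 0` the division by two is exact because of the factor `m + 4`.
    have he : 2 ∣ 2 ^ m * (m + 4) := by
      rcases m with _ | m
      · simp
      · exact Dvd.dvd.mul_right (dvd_pow_self 2 (by omega)) _
    rw [Nat.div_mul_cancel he, pow_succ, mul_right_comm, Nat.mul_div_cancel _ (by norm_num)]
    ring
  · have h : n + 1 + 4 - (n + 1) = 4 := by omega
    rw [h]
    simp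

lemma det_Amat_formula (n : ℕ) : (Amat (n + 2)).det = (n + 3) * eprod (n + 2) := by
  induction n with
  | zero =>
    rw [det_Amat_succ, det_Amat_one, eprod_succ, eprod_succ]
    simp [hprod, eprod]
  | succ n ih =>
    rw [det_Amat_succ, ih, eprod_succ (n + 2)]
    push_cast
    ring

lemma eprod_ne_zero (n : ℕ) : eprod n ≠ 0 := by
  refine prod_ne_zero_iff.2 fun k hk => pow_ne_zero _ ?_
  rw [mem_Icc] at hk
  exact_mod_cast (by omega : k ≠ 0)

/-- Determinant of `A_n` (the exponent `2^{n-1-k}(n+4-k)` is written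
as `(2^{n-k}(n+4-k))/2`, which is the same integer, also for `k = n`), and
invertibility of `A_n` for all `n ≥ 0`. -/
theorem detA :
    (∀ n : ℕ, 2 ≤ n →
      (Amat n).det =
        (n + 1) * ∏ k ∈ Finset.Icc 1 n, (k : ℤ) ^ ((2 ^ (n - k) * (n + 4 - k)) / 2)) ∧
    (Amat 0).det = 1 ∧ (Amat 1).det = -2 ∧
    (∀ n : ℕ, (Amat n).det ≠ 0) := by
  refine ⟨fun n hn => ?_, det_Amat_zero, det_Amat_one, fun n => ?_⟩
  · obtain ⟨m, rfl⟩ := Nat.exists_eq_add_of_le' hn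
    rw [det_Amat_formula, eprod]
    congr 1
  · match n with
    | 0 => rw [det_Amat_zero]; norm_num
    | 1 => rw [det_Amat_one]; norm_num
    | n + 2 =>
      rw [det_Amat_formula]
      exact mul_ne_zero (by positivity) (eprod_ne_zero _)
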